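/- The set N = Γ_A ∪ Γ_B ∪ Γ_C ∪ Γ_{A₁} ∪ Γ_{B₁} ∪ Γ_{C₁} has exactly 288 elements. -/

import Mathlib

/-!
The recursions reduce a relation between the generators to relations applied to the remaining
letters, so relations are proved by induction on words. The generators are involutions, any two of
the Greek letters `α, β, γ` generate a dihedral group, and conjugation by a Latin letter `a, b, c`
sends Greek letters to Greek words, while `(bc)^4 = 1`, `(ab)^4 = (αβ)^4` and `(ac)^2 = (αγ)^2`.
Therefore each of the six subgroups is a product of a Greek dihedral group and a set of alternating
Latin words; for the last two, `cγ`, `aα` and `bβ` play the role of Latin letters.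

Suitable choices of the representing words make elements common to several subgroups coincide as
words. This leaves 288 words, and these already act in 288 different ways on the three words
`11111`, `12111`, `21111`.
-/

/-- The alphabet `X = {1,2,3,4}`, encoded as `Fin 4` (letter i ↔ `i-1`). -/
abbrev Alph : Type := Fin 4

/-- The set `X*` of finite words over the alphabet. -/
abbrev Word : Type := List Alph

/-- The permutation σ = (12)(34) of the alphabet. -/
def permSigma : Alph → Alph := ![1, 0, 3, 2]

/-- The permutation π = (13)(24) of the alphabet. -/
def permPi : Alph → Alph := ![2, 3, 0, 1]

/-- A system of six bijections α, β, γ, a, b, c of `X*` satisfying the defining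
recursions (each fixes the empty word; the recursions uniquely determine them). -/
structure NekSystem where
  α : Equiv.Perm Word
  β : Equiv.Perm Word
  γ : Equiv.Perm Word
  a : Equiv.Perm Word
  b : Equiv.Perm Word
  c : Equiv.Perm Word
  hαnil : α [] = []
  hβnil : β [] = []
  hγnil : γ [] = []
  hanil : a [] = []
  hbnil : b [] = []
  hcnil : c [] = []
  hα : ∀ (x : Alph) (w : Word), α (x :: w) = permSigma x :: w
  ha : ∀ (x : Alph) (w : Word), a (x :: w) = permPi x :: w
  hβ0 : ∀ w : Word, β (0 :: w) = 0 :: α w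
  hβ1 : ∀ w : Word, β (1 :: w) = 1 :: γ w
  hβ2 : ∀ w : Word, β (2 :: w) = 2 :: α w
  hβ3 : ∀ w : Word, β (3 :: w) = 3 :: γ w
  hγ0 : ∀ w : Word, γ (0 :: w) = 0 :: β w
  hγ1 : ∀ w : Word, γ (1 :: w) = 1 :: w
  hγ2 : ∀ w : Word, γ (2 :: w) = 2 :: w
  hγ3 : ∀ w : Word, γ (3 :: w) = 3 :: β w
  hb0 : ∀ w : Word, b (0 :: w) = 0 :: a (α w)
  hb1 : ∀ w : Word, b (1 :: w) = 1 :: a (α w)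
  hb2 : ∀ w : Word, b (2 :: w) = 2 :: c w
  hb3 : ∀ w : Word, b (3 :: w) = 3 :: c w
  hc0 : ∀ w : Word, c (0 :: w) = 0 :: b (β w)
  hc1 : ∀ w : Word, c (1 :: w) = 1 :: b (β w)
  hc2 : ∀ w : Word, c (2 :: w) = 2 :: b w
  hc3 : ∀ w : Word, c (3 :: w) = 3 :: b w

/-- The nucleus N = Γ_A ∪ Γ_B ∪ Γ_C ∪ Γ_{A₁} ∪ Γ_{B₁} ∪ Γ_{C₁}. -/
def Nuc (S : NekSystem) : Set (Equiv.Perm Word) :=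
  ↑(Subgroup.closure {S.β, S.γ, S.b, S.c}) ∪
  ↑(Subgroup.closure {S.α, S.γ, S.a, S.c}) ∪
  ↑(Subgroup.closure {S.α, S.β, S.a, S.b}) ∪
  ↑(Subgroup.closure {S.α, S.b, S.c}) ∪
  ↑(Subgroup.closure {S.β, S.a, S.c * S.γ}) ∪
  ↑(Subgroup.closure {S.γ, S.a * S.α, S.b * S.β})

open Subgroup
open scoped Pointwise

/-! ### Dihedral normal forms -/

section Alternating

variable {M N G : Type*} [Monoid M] [Monoid N] [Group G]

/-- The alternating product `⋯ x y x y` with `n` factors, the last of which is `y`. -/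
def altMul (x y : M) : ℕ → M
  | 0 => 1
  | n + 1 => altMul y x n * y

theorem map_altMul (f : M →* N) (x y : M) (n : ℕ) : f (altMul x y n) = altMul (f x) (f y) n := by
  induction n generalizing x y with
  | zero => exact map_one f
  | succ n ih => rw [altMul, map_mul, ih, altMul]

theorem altMul_two_mul (x y : M) (k : ℕ) : altMul x y (2 * k) = (x * y) ^ k := by
  induction k with
  | zero => rw [mul_zero, altMul, pow_zero]
  | succ k ih => rw [Nat.mul_succ, altMul, altMul, ih, mul_assoc, pow_succ]

theorem altMul_two_mul_add_one (x y : M) (k : ℕ) :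
    altMul x y (2 * k + 1) = (y * x) ^ k * y := by
  rw [altMul, altMul_two_mul]

theorem altMul_mem (H : Subgroup G) {x y : G} (hx : x ∈ H) (hy : y ∈ H) (n : ℕ) :
    altMul x y n ∈ H := by
  induction n generalizing x y with
  | zero => exact H.one_mem
  | succ n ih => exact H.mul_mem (ih hy hx) hy

theorem commute_altMul_left {x y z : M} (hx : Commute x z) (hy : Commute y z) (n : ℕ) :
    Commute (altMul x y n) z := by
  induction n generalizing x y with
  | zero => exact Commute.one_left z
  | succ n ih => exact (ih hy hx).mul_left hy

theorem altMul_mul_altMul {x y x' y' : M} (hxx : Commute x' x) (hxy : Commute x' y)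
    (hyx : Commute y' x) (hyy : Commute y' y) (n : ℕ) :
    altMul x y n * altMul x' y' n = altMul (x * x') (y * y') n := by
  induction n generalizing x y x' y' with
  | zero => exact mul_one 1
  | succ n ih =>
    rw [altMul, altMul, altMul, ← ih hyy hyx hxy hxx]
    simp only [mul_assoc, (commute_altMul_left hyy hxy n).left_comm]

/-- The set of alternating products of `x` and `y` of length less than `m`, together with one of the
two of length `m`. If `x` and `y` are involutions with `(x y) ^ m = 1`, these are the elements of
the dihedral group generated by `x` and `y`. -/
def dihedralSet (x y : M) (m : ℕ) : Set M :=
  altMul x y '' Set.Iic m ∪ altMul y x '' Set.Iio m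

/-- `dihedralSet` as a computable finite set. -/
def dihedralFinset [DecidableEq M] (x y : M) (m : ℕ) : Finset M :=
  (Finset.Iic m).image (altMul x y) ∪ (Finset.Iio m).image (altMul y x)

@[simp]
theorem coe_dihedralFinset [DecidableEq M] (x y : M) (m : ℕ) :
    (dihedralFinset x y m : Set M) = dihedralSet x y m := by
  simp [dihedralFinset, dihedralSet]

theorem image_dihedralSet (f : M →* N) (x y : M) (m : ℕ) :
    f '' dihedralSet x y m = dihedralSet (f x) (f y) m := by
  simp only [dihedralSet, Set.image_union, Set.image_image, map_altMul]

theorem dihedralSet_two (x y : M) : dihedralSet x y 2 = {1, x, y, x * y} := by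
  have Iic_two : Set.Iic 2 = ({0, 1, 2} : Set ℕ) := by grind
  have Iio_two : Set.Iio 2 = ({0, 1} : Set ℕ) := by grind
  simp only [dihedralSet, Iic_two, Iio_two, Set.image_insert_eq, Set.image_singleton, altMul,
    one_mul]
  grind

theorem dihedralSet_subset (H : Subgroup G) {x y : G} (hx : x ∈ H) (hy : y ∈ H) (m : ℕ) :
    dihedralSet x y m ⊆ H := by
  rintro _ (⟨n, _, rfl⟩ | ⟨n, _, rfl⟩)
  exacts [altMul_mem H hx hy n, altMul_mem H hy hx n]

variable {H : Subgroup G} {x y : G} {m : ℕ}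

theorem mul_eq_inv_mul_swap (hx : x * x = 1) (hy : y * y = 1) : y * x = (x * y)⁻¹ := by
  rw [mul_inv_rev, inv_eq_of_mul_eq_one_left hx, inv_eq_of_mul_eq_one_left hy]

theorem altMul_div_altMul_mem (hx : x * x = 1) (hy : y * y = 1) (h : (x * y) ^ m ∈ H) :
    altMul y x m / altMul x y m ∈ H := by
  obtain ⟨k, rfl | rfl⟩ := m.even_or_odd'
  · have : altMul y x (2 * k) / altMul x y (2 * k) = ((x * y) ^ (2 * k))⁻¹ := by
      rw [altMul_two_mul, altMul_two_mul, mul_eq_inv_mul_swap hx hy, inv_pow, div_eq_mul_inv,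
        two_mul, pow_add, mul_inv_rev]
    exact this ▸ H.inv_mem h
  · have : altMul y x (2 * k + 1) / altMul x y (2 * k + 1) = (x * y) ^ (2 * k + 1) := by
      rw [altMul_two_mul_add_one, altMul_two_mul_add_one, mul_eq_inv_mul_swap hx hy,
        div_eq_mul_inv, mul_inv_rev, inv_eq_of_mul_eq_one_left hy, inv_pow, inv_inv, mul_assoc,
        ← mul_assoc x, ← pow_succ', ← pow_add]
      congr 1
      ring
    exact this ▸ h

theorem mul_dihedralSet_swap_subset (hx : x * x = 1) (hy : y * y = 1) (h : (x * y) ^ m ∈ H) :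
    (H : Set G) * dihedralSet y x m ⊆ H * dihedralSet x y m := by
  rintro _ ⟨k, hk, _, ⟨n, hn, rfl⟩ | ⟨n, hn, rfl⟩, rfl⟩
  · obtain hlt | rfl := Nat.lt_or_eq_of_le hn
    · exact Set.mul_mem_mul hk (.inr ⟨n, hlt, rfl⟩)
    · refine ⟨_, H.mul_mem hk (altMul_div_altMul_mem hx hy h), _, .inl ⟨n, hn, rfl⟩, ?_⟩
      simp only [mul_assoc, div_mul_cancel]
  · exact Set.mul_mem_mul hk (.inl ⟨n, Nat.le_of_lt hn, rfl⟩)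

theorem mul_dihedralSet_swap (hx : x * x = 1) (hy : y * y = 1) (h : (x * y) ^ m ∈ H) :
    (H : Set G) * dihedralSet y x m = H * dihedralSet x y m := by
  refine (mul_dihedralSet_swap_subset hx hy h).antisymm (mul_dihedralSet_swap_subset hy hx ?_)
  rw [mul_eq_inv_mul_swap hx hy, inv_pow]
  exact H.inv_mem h

theorem mul_right_mem_mul_dihedralSet (hm : 0 < m) (hy : y * y = 1) {g : G}
    (hg : g ∈ (H : Set G) * dihedralSet x y m) : g * y ∈ (H : Set G) * dihedralSet x y m := by
  obtain ⟨k, hk, _, ⟨n, hn, rfl⟩ | ⟨n, hn, rfl⟩, rfl⟩ := hg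
  · cases n with
    | zero => exact ⟨k, hk, altMul x y 1, .inl ⟨1, hm, rfl⟩, by simp [altMul]⟩
    | succ n => exact ⟨k, hk, altMul y x n, .inr ⟨n, hn, rfl⟩, by simp [altMul, mul_assoc, hy]⟩
  · exact ⟨k, hk, altMul x y (n + 1), .inl ⟨n + 1, hn, rfl⟩, by simp [altMul, mul_assoc]⟩

theorem closure_pair_subset_mul_dihedralSet (hm : 0 < m) (hx : x * x = 1) (hy : y * y = 1)
    (h : (x * y) ^ m ∈ H) : (closure {x, y} : Set G) ⊆ H * dihedralSet x y m := by
  have mul_mem : ∀ z ∈ ({x, y} : Set G), ∀ g ∈ (H : Set G) * dihedralSet x y m,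
      g * z ∈ (H : Set G) * dihedralSet x y m := by
    rintro z (rfl | rfl) g hg
    · rw [← mul_dihedralSet_swap hx hy h] at hg ⊢
      exact mul_right_mem_mul_dihedralSet hm hx hg
    · exact mul_right_mem_mul_dihedralSet hm hy hg
  have inv_eq : ∀ z ∈ ({x, y} : Set G), z⁻¹ = z := by
    rintro z (rfl | rfl)
    exacts [inv_eq_of_mul_eq_one_left hx, inv_eq_of_mul_eq_one_left hy]
  intro g hg
  induction hg using closure_induction_right with
  | one => exact ⟨1, H.one_mem, 1, .inl ⟨0, Nat.zero_le m, rfl⟩, mul_one 1⟩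
  | mul_right g _ z hz ih => exact mul_mem z hz g ih
  | mul_inv_cancel g _ z hz ih =>
    rw [inv_eq z hz]
    exact mul_mem z hz g ih

theorem closure_pair_eq_dihedralSet (hm : 0 < m) (hx : x * x = 1) (hy : y * y = 1)
    (h : (x * y) ^ m = 1) : (closure {x, y} : Set G) = dihedralSet x y m := by
  refine Set.Subset.antisymm ?_ (dihedralSet_subset _ ?_ ?_ m)
  · simpa using closure_pair_subset_mul_dihedralSet (H := ⊥) hm hx hy (by simpa using h)
  all_goals exact subset_closure (by simp)

theorem closure_singleton_eq_dihedralSet (hx : x * x = 1) :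
    (closure {x} : Set G) = dihedralSet x x 1 := by
  simpa using closure_pair_eq_dihedralSet one_pos hx hx (by simpa using hx)

theorem sup_closure_pair_eq_mul_dihedralSet (hm : 0 < m) (hx : x * x = 1) (hy : y * y = 1)
    (hH : closure {x, y} ≤ normalizer (H : Set G)) (h : (x * y) ^ m ∈ H) :
    ((H ⊔ closure {x, y} : Subgroup G) : Set G) = H * dihedralSet x y m := by
  rw [coe_mul_of_right_le_normalizer_left H _ hH]
  apply Set.Subset.antisymm
  · calc (H : Set G) * closure {x, y}
      _ ⊆ H * (H * dihedralSet x y m) :=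
        Set.mul_subset_mul_left (closure_pair_subset_mul_dihedralSet hm hx hy h)
      _ = H * dihedralSet x y m := by rw [← mul_assoc, coe_mul_coe]
  · exact Set.mul_subset_mul_left
      (dihedralSet_subset _ (subset_closure (by simp)) (subset_closure (by simp)) m)

theorem closure_le_normalizer_closure {s t : Set G} (ht : ∀ g ∈ t, g * g = 1)
    (h : ∀ g ∈ t, ∀ z ∈ s, g * z * g ∈ closure s) :
    closure t ≤ normalizer (closure s : Set G) := by
  rw [closure_le]
  intro g hg
  have inv_eq : g⁻¹ = g := inv_eq_of_mul_eq_one_left (ht g hg)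
  have conj_mem : ∀ k ∈ closure s, g * k * g⁻¹ ∈ closure s := by
    have : (closure s).map (MulAut.conj g).toMonoidHom ≤ closure s := by
      rw [MonoidHom.map_closure, closure_le]
      rintro _ ⟨z, hz, rfl⟩
      simpa [inv_eq] using h g hg z hz
    exact fun k hk => this ⟨k, hk, rfl⟩
  refine mem_normalizer_iff.2 fun k => ⟨conj_mem k, fun hk => ?_⟩
  have := conj_mem _ hk
  rwa [inv_eq, mul_assoc g k g, ← mul_assoc g g, ht g hg, one_mul, mul_assoc, ht g hg,
    mul_one] at this

theorem closure_le_normalizer_closure_of_commute {s t : Set G}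
    (h : ∀ g ∈ t, ∀ z ∈ s, Commute g z) : closure t ≤ normalizer (closure s : Set G) := by
  refine le_trans ?_ (centralizer_le_normalizer (closure s : Set G))
  rw [centralizer_closure, closure_le]
  exact fun g hg => mem_centralizer_iff.2 fun z hz => (h g hg z hz).symm

end Alternating


/-! ### Relations between the generators -/

theorem word_induction {P : Word → Prop} (nil : P []) (zero : ∀ w, P w → P (0 :: w))
    (one : ∀ w, P w → P (1 :: w)) (two : ∀ w, P w → P (2 :: w)) (three : ∀ w, P w → P (3 :: w))
    (w : Word) : P w := by
  induction w with
  | nil => exact nil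
  | cons x w ih =>
    fin_cases x
    exacts [zero w ih, one w ih, two w ih, three w ih]

theorem pow_apply_cons {f g : Equiv.Perm Word} {x : Alph} (h : ∀ w, f (x :: w) = x :: g w)
    (n : ℕ) (w : Word) : (f ^ n) (x :: w) = x :: (g ^ n) w := by
  induction n generalizing w with
  | zero => rfl
  | succ n ih => rw [pow_succ, pow_succ, Equiv.Perm.mul_apply, Equiv.Perm.mul_apply, h, ih]

namespace NekSystem

attribute [simp] hαnil hβnil hγnil hanil hbnil hcnil hα ha hβ0 hβ1 hβ2 hβ3 hγ0 hγ1 hγ2 hγ3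
  hb0 hb1 hb2 hb3 hc0 hc1 hc2 hc3 permSigma permPi

variable (S : NekSystem)

@[simp]
theorem α_α_apply (w : Word) : S.α (S.α w) = w := by
  induction w using word_induction <;> simp

theorem β_β_apply_and_γ_γ_apply (w : Word) : S.β (S.β w) = w ∧ S.γ (S.γ w) = w := by
  induction w using word_induction <;> simp_all

@[simp]
theorem β_β_apply (w : Word) : S.β (S.β w) = w := (S.β_β_apply_and_γ_γ_apply w).1

@[simp]
theorem γ_γ_apply (w : Word) : S.γ (S.γ w) = w := (S.β_β_apply_and_γ_γ_apply w).2

@[simp]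
theorem a_a_apply (w : Word) : S.a (S.a w) = w := by
  induction w using word_induction <;> simp

@[simp]
theorem a_α_apply (w : Word) : S.a (S.α w) = S.α (S.a w) := by
  induction w using word_induction <;> simp

@[simp]
theorem a_β_apply (w : Word) : S.a (S.β w) = S.β (S.a w) := by
  induction w using word_induction <;> simp

@[simp]
theorem a_γ_apply (w : Word) : S.a (S.γ w) = S.α (S.γ (S.α (S.a w))) := by
  induction w using word_induction <;> simp

@[simp]
theorem b_α_apply (w : Word) : S.b (S.α w) = S.α (S.b w) := by
  induction w using word_induction <;> simp

@[simp]
theorem c_α_apply (w : Word) : S.c (S.α w) = S.α (S.c w) := by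
  induction w using word_induction <;> simp

theorem b_β_apply_and_c_γ_apply (w : Word) :
    S.b (S.β w) = S.β (S.b w) ∧ S.c (S.γ w) = S.γ (S.c w) := by
  induction w using word_induction <;> simp_all

@[simp]
theorem b_β_apply (w : Word) : S.b (S.β w) = S.β (S.b w) := (S.b_β_apply_and_c_γ_apply w).1

@[simp]
theorem c_γ_apply (w : Word) : S.c (S.γ w) = S.γ (S.c w) := (S.b_β_apply_and_c_γ_apply w).2

theorem b_γ_apply_and_c_β_apply (w : Word) :
    S.b (S.γ w) = S.β (S.γ (S.β (S.b w))) ∧ S.c (S.β w) = S.γ (S.β (S.γ (S.c w))) := by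
  induction w using word_induction <;> simp_all

@[simp]
theorem b_γ_apply (w : Word) : S.b (S.γ w) = S.β (S.γ (S.β (S.b w))) :=
  (S.b_γ_apply_and_c_β_apply w).1

@[simp]
theorem c_β_apply (w : Word) : S.c (S.β w) = S.γ (S.β (S.γ (S.c w))) :=
  (S.b_γ_apply_and_c_β_apply w).2

theorem b_b_apply_and_c_c_apply (w : Word) : S.b (S.b w) = w ∧ S.c (S.c w) = w := by
  induction w using word_induction <;> simp_all

@[simp]
theorem b_b_apply (w : Word) : S.b (S.b w) = w := (S.b_b_apply_and_c_c_apply w).1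

@[simp]
theorem c_c_apply (w : Word) : S.c (S.c w) = w := (S.b_b_apply_and_c_c_apply w).2

theorem α_mul_self : S.α * S.α = 1 := Equiv.ext S.α_α_apply

theorem β_mul_self : S.β * S.β = 1 := Equiv.ext S.β_β_apply

theorem γ_mul_self : S.γ * S.γ = 1 := Equiv.ext S.γ_γ_apply

theorem a_mul_self : S.a * S.a = 1 := Equiv.ext S.a_a_apply

theorem b_mul_self : S.b * S.b = 1 := Equiv.ext S.b_b_apply

theorem c_mul_self : S.c * S.c = 1 := Equiv.ext S.c_c_apply

theorem αγ_pow_four : (S.α * S.γ) ^ 4 = 1 := by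
  ext1 w
  induction w using word_induction <;> simp [pow_succ]

theorem γα_pow_four : (S.γ * S.α) ^ 4 = 1 := by
  rw [mul_eq_inv_mul_swap S.α_mul_self S.γ_mul_self, inv_pow, αγ_pow_four, inv_one]

theorem αβ_pow_eight : (S.α * S.β) ^ 8 = 1 := by
  rw [pow_mul _ 2 4]
  ext1 w
  induction w using word_induction with
  | nil => simp [pow_succ]
  | zero w | two w =>
    rw [pow_apply_cons (g := S.γ * S.α) (by simp [pow_two]), γα_pow_four]
    rfl
  | one w | three w =>
    rw [pow_apply_cons (g := S.α * S.γ) (by simp [pow_two]), αγ_pow_four]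
    rfl

theorem βγ_pow_eight : (S.β * S.γ) ^ 8 = 1 := by
  ext1 w
  induction w using word_induction with
  | nil => simp [pow_succ]
  | zero w =>
    rw [pow_apply_cons (g := S.α * S.β) (by simp), αβ_pow_eight]
    rfl
  | one w => simp [pow_succ]
  | two w => simp [pow_succ]
  | three w ih =>
    rw [pow_apply_cons (g := S.γ * S.β) (by simp),
      mul_eq_inv_mul_swap S.β_mul_self S.γ_mul_self, inv_pow]
    congr 1
    exact Equiv.Perm.inv_eq_iff_eq.2 ih.symm

theorem ac_sq : (S.a * S.c) ^ 2 = (S.α * S.γ) ^ 2 := by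
  ext1 w
  induction w using word_induction <;> simp [pow_two]

theorem γα_sq : (S.γ * S.α) ^ 2 = (S.α * S.γ) ^ 2 := by
  rw [mul_eq_inv_mul_swap S.α_mul_self S.γ_mul_self, inv_pow, inv_eq_iff_mul_eq_one, ← pow_add,
    αγ_pow_four]

theorem ca_sq : (S.c * S.a) ^ 2 = (S.α * S.γ) ^ 2 := by
  rw [mul_eq_inv_mul_swap S.a_mul_self S.c_mul_self, inv_pow, ac_sq, inv_eq_iff_mul_eq_one,
    ← pow_add, αγ_pow_four]

theorem commute_a_α : Commute S.a S.α := Equiv.ext S.a_α_apply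

theorem commute_a_β : Commute S.a S.β := Equiv.ext S.a_β_apply

theorem commute_b_α : Commute S.b S.α := Equiv.ext S.b_α_apply

theorem commute_b_β : Commute S.b S.β := Equiv.ext S.b_β_apply

theorem commute_c_α : Commute S.c S.α := Equiv.ext S.c_α_apply

theorem commute_c_γ : Commute S.c S.γ := Equiv.ext S.c_γ_apply

theorem acα_sq : (S.a * S.c * S.α) ^ 2 = (S.α * S.γ) ^ 2 := by
  rw [(S.commute_a_α.mul_left S.commute_c_α).mul_pow, ac_sq, pow_two S.α, α_mul_self, mul_one]

theorem caα_sq : (S.c * S.a * S.α) ^ 2 = (S.α * S.γ) ^ 2 := by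
  rw [(S.commute_c_α.mul_left S.commute_a_α).mul_pow, ca_sq, pow_two S.α, α_mul_self, mul_one]

theorem ab_pow_four : (S.a * S.b) ^ 4 = (S.α * S.β) ^ 4 := by
  rw [pow_mul _ 2 2, pow_mul (S.α * S.β) 2 2]
  ext1 w
  induction w using word_induction with
  | nil => simp [pow_succ]
  | zero w =>
    rw [pow_apply_cons (g := S.c * S.a * S.α) (by simp [pow_two]),
      pow_apply_cons (g := S.γ * S.α) (by simp [pow_two]), caα_sq, γα_sq]
  | one w =>
    rw [pow_apply_cons (g := S.c * S.a * S.α) (by simp [pow_two]),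
      pow_apply_cons (g := S.α * S.γ) (by simp [pow_two]), caα_sq]
  | two w =>
    rw [pow_apply_cons (g := S.a * S.c * S.α) (by simp [pow_two]),
      pow_apply_cons (g := S.γ * S.α) (by simp [pow_two]), acα_sq, γα_sq]
  | three w =>
    rw [pow_apply_cons (g := S.a * S.c * S.α) (by simp [pow_two]),
      pow_apply_cons (g := S.α * S.γ) (by simp [pow_two]), acα_sq]

theorem aα_mul_bβ_pow_four : (S.a * S.α * (S.b * S.β)) ^ 4 = 1 := by
  have comm : Commute (S.a * S.b) (S.α * S.β) :=
    (S.commute_a_α.mul_right S.commute_a_β).mul_left (S.commute_b_α.mul_right S.commute_b_β)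
  have regroup : S.a * S.α * (S.b * S.β) = S.a * S.b * (S.α * S.β) := by
    rw [mul_assoc, ← mul_assoc S.α, ← S.commute_b_α.eq, mul_assoc, mul_assoc]
  rw [regroup, comm.mul_pow, ab_pow_four, ← pow_add, αβ_pow_eight]

theorem bc_pow_four : (S.b * S.c) ^ 4 = 1 := by
  ext1 w
  induction w using word_induction with
  | nil => simp [pow_succ]
  | zero w | one w =>
    rw [pow_apply_cons (g := S.a * S.α * (S.b * S.β)) (by simp), aα_mul_bβ_pow_four]
    rfl
  | two w ih | three w ih =>
    rw [pow_apply_cons (g := S.c * S.b) (by simp),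
      mul_eq_inv_mul_swap S.b_mul_self S.c_mul_self, inv_pow]
    congr 1
    exact Equiv.Perm.inv_eq_iff_eq.2 ih.symm

theorem acγ_sq : (S.a * (S.c * S.γ)) ^ 2 = 1 := by
  have : (S.a * (S.c * S.γ)) ^ 2 = (S.α * S.γ) ^ 2 * (S.a * S.c) ^ 2 := by
    ext1 w
    simp [pow_two]
  rw [this, ac_sq, ← pow_add, αγ_pow_four]

/-! ### The six subgroups -/

theorem closure_βγbc : (closure {S.β, S.γ, S.b, S.c} : Set (Equiv.Perm Word)) =
    dihedralSet S.β S.γ 8 * dihedralSet S.b S.c 4 := by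
  have hβ : S.β ∈ closure {S.β, S.γ} := subset_closure (by simp)
  have hγ : S.γ ∈ closure {S.β, S.γ} := subset_closure (by simp)
  have normal : closure {S.b, S.c} ≤ normalizer (closure {S.β, S.γ} : Set (Equiv.Perm Word)) := by
    have bβb : S.b * S.β * S.b = S.β := by ext1 w; simp
    have bγb : S.b * S.γ * S.b = S.β * S.γ * S.β := by ext1 w; simp
    have cβc : S.c * S.β * S.c = S.γ * S.β * S.γ := by ext1 w; simp
    have cγc : S.c * S.γ * S.c = S.γ := by ext1 w; simp
    apply closure_le_normalizer_closure <;>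
      simp [b_mul_self, c_mul_self, bβb, bγb, cβc, cγc, hβ, hγ, mul_mem]
  rw [← closure_pair_eq_dihedralSet (by simp) S.β_mul_self S.γ_mul_self S.βγ_pow_eight,
    ← sup_closure_pair_eq_mul_dihedralSet (by simp) S.b_mul_self S.c_mul_self normal
      (by simp [bc_pow_four]), ← Subgroup.closure_union, Set.insert_union, Set.singleton_union]

theorem closure_αγac : (closure {S.α, S.γ, S.a, S.c} : Set (Equiv.Perm Word)) =
    dihedralSet S.α S.γ 4 * dihedralSet S.a S.c 2 := by
  have hα : S.α ∈ closure {S.α, S.γ} := subset_closure (by simp)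
  have hγ : S.γ ∈ closure {S.α, S.γ} := subset_closure (by simp)
  have normal : closure {S.a, S.c} ≤ normalizer (closure {S.α, S.γ} : Set (Equiv.Perm Word)) := by
    have aαa : S.a * S.α * S.a = S.α := by ext1 w; simp
    have aγa : S.a * S.γ * S.a = S.α * S.γ * S.α := by ext1 w; simp
    have cαc : S.c * S.α * S.c = S.α := by ext1 w; simp
    have cγc : S.c * S.γ * S.c = S.γ := by ext1 w; simp
    apply closure_le_normalizer_closure <;>
      simp [a_mul_self, c_mul_self, aαa, aγa, cαc, cγc, hα, hγ, mul_mem]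
  rw [← closure_pair_eq_dihedralSet (by simp) S.α_mul_self S.γ_mul_self S.αγ_pow_four,
    ← sup_closure_pair_eq_mul_dihedralSet (by simp) S.a_mul_self S.c_mul_self normal
      (S.ac_sq ▸ pow_mem (mul_mem hα hγ) 2), ← Subgroup.closure_union, Set.insert_union,
    Set.singleton_union]

theorem closure_αβab : (closure {S.α, S.β, S.a, S.b} : Set (Equiv.Perm Word)) =
    dihedralSet S.α S.β 8 * dihedralSet S.a S.b 4 := by
  have hα : S.α ∈ closure {S.α, S.β} := subset_closure (by simp)
  have hβ : S.β ∈ closure {S.α, S.β} := subset_closure (by simp)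
  have normal : closure {S.a, S.b} ≤ normalizer (closure {S.α, S.β} : Set (Equiv.Perm Word)) :=
    closure_le_normalizer_closure_of_commute
      (by simp [commute_a_α, commute_a_β, commute_b_α, commute_b_β])
  rw [← closure_pair_eq_dihedralSet (by simp) S.α_mul_self S.β_mul_self S.αβ_pow_eight,
    ← sup_closure_pair_eq_mul_dihedralSet (by simp) S.a_mul_self S.b_mul_self normal
      (S.ab_pow_four ▸ pow_mem (mul_mem hα hβ) 4), ← Subgroup.closure_union, Set.insert_union,
    Set.singleton_union]

theorem closure_αbc : (closure {S.α, S.b, S.c} : Set (Equiv.Perm Word)) =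
    dihedralSet S.α S.α 1 * dihedralSet S.b S.c 4 := by
  have normal : closure {S.b, S.c} ≤ normalizer (closure {S.α} : Set (Equiv.Perm Word)) :=
    closure_le_normalizer_closure_of_commute (by simp [commute_b_α, commute_c_α])
  rw [← closure_singleton_eq_dihedralSet S.α_mul_self,
    ← sup_closure_pair_eq_mul_dihedralSet (by simp) S.b_mul_self S.c_mul_self normal
      (by simp [bc_pow_four]), ← Subgroup.closure_union, Set.singleton_union]

theorem closure_βacγ : (closure {S.β, S.a, S.c * S.γ} : Set (Equiv.Perm Word)) =
    dihedralSet S.β S.β 1 * dihedralSet S.a (S.c * S.γ) 2 := by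
  have cγ_mul_self : S.c * S.γ * (S.c * S.γ) = 1 := by ext1 w; simp
  have commute_cγ_β : Commute (S.c * S.γ) S.β := by ext1 w; simp
  have normal :
      closure {S.a, S.c * S.γ} ≤ normalizer (closure {S.β} : Set (Equiv.Perm Word)) :=
    closure_le_normalizer_closure_of_commute (by simp [commute_a_β, commute_cγ_β])
  rw [← closure_singleton_eq_dihedralSet S.β_mul_self,
    ← sup_closure_pair_eq_mul_dihedralSet (by simp) S.a_mul_self cγ_mul_self normal
      (by simp [acγ_sq]), ← Subgroup.closure_union, Set.singleton_union]

theorem closure_γaαbβ : (closure {S.γ, S.a * S.α, S.b * S.β} : Set (Equiv.Perm Word)) =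
    dihedralSet S.γ S.γ 1 * dihedralSet (S.a * S.α) (S.b * S.β) 4 := by
  have aα_mul_self : S.a * S.α * (S.a * S.α) = 1 := by ext1 w; simp
  have bβ_mul_self : S.b * S.β * (S.b * S.β) = 1 := by ext1 w; simp
  have commute_aα_γ : Commute (S.a * S.α) S.γ := by ext1 w; simp
  have commute_bβ_γ : Commute (S.b * S.β) S.γ := by ext1 w; simp
  have normal :
      closure {S.a * S.α, S.b * S.β} ≤ normalizer (closure {S.γ} : Set (Equiv.Perm Word)) :=
    closure_le_normalizer_closure_of_commute (by simp [commute_aα_γ, commute_bβ_γ])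
  rw [← closure_singleton_eq_dihedralSet S.γ_mul_self,
    ← sup_closure_pair_eq_mul_dihedralSet (by simp) aα_mul_self bβ_mul_self normal
      (by simp [aα_mul_bβ_pow_four]), ← Subgroup.closure_union, Set.singleton_union]

end NekSystem

/-! ### Normal forms and their action on test words -/

/-- Names of the six generators, so that words in the generators form `FreeMonoid Gen`. -/
inductive Gen
  | α | β | γ | a | b | c
  deriving DecidableEq

mutual

/-- The action of `β` as a computable function. -/
def betaAct : Word → Word
  | [] => []
  | x :: w => x :: ![w.modifyHead permSigma, gammaAct w, w.modifyHead permSigma, gammaAct w] x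

/-- The action of `γ` as a computable function. -/
def gammaAct : Word → Word
  | [] => []
  | x :: w => x :: ![betaAct w, w, w, betaAct w] x

end

mutual

/-- The action of `b` as a computable function. -/
def bAct : Word → Word
  | [] => []
  | x :: w =>
    let aαw := w.modifyHead (permPi ∘ permSigma)
    x :: ![aαw, aαw, cAct w, cAct w] x

/-- The action of `c` as a computable function. The product `b β` is evaluated as `β b`, which
makes the recursion structural. -/
def cAct : Word → Word
  | [] => []
  | x :: w => x :: ![betaAct (bAct w), betaAct (bAct w), bAct w, bAct w] x

end

/-- The action of the generators on `X*` as computable functions. -/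
def Gen.act : Gen → Function.End Word
  | α => List.modifyHead permSigma
  | β => betaAct
  | γ => gammaAct
  | a => List.modifyHead permPi
  | b => bAct
  | c => cAct

/-- The action on `X*` of words in the generators, in computable form. -/
def wordAct : FreeMonoid Gen →* Function.End Word := FreeMonoid.lift Gen.act

section NormalForms

open FreeMonoid (of)
open Gen

instance : DecidableEq (FreeMonoid Gen) := inferInstanceAs (DecidableEq (List Gen))

/-- Words representing the elements of `Γ_A`. -/
def normalFormsA : Finset (FreeMonoid Gen) :=
  dihedralFinset (of β) (of γ) 8 * dihedralFinset (of b) (of c) 4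

/-- Words representing the elements of `Γ_B`. -/
def normalFormsB : Finset (FreeMonoid Gen) :=
  dihedralFinset (of α) (of γ) 4 * dihedralFinset (of a) (of c) 2

/-- Words representing the elements of `Γ_C`. -/
def normalFormsC : Finset (FreeMonoid Gen) :=
  dihedralFinset (of α) (of β) 8 * dihedralFinset (of a) (of b) 4

/-- Words representing the elements of `Γ_{A₁}`. -/
def normalFormsA₁ : Finset (FreeMonoid Gen) :=
  dihedralFinset (of α) (of α) 1 * dihedralFinset (of b) (of c) 4

/-- Words representing the elements of `Γ_{B₁}`. The elements `c γ` and `a c γ` are written as they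
are in `normalFormsA` and `normalFormsB`. -/
def normalFormsB₁ : Finset (FreeMonoid Gen) :=
  dihedralFinset (of β) (of β) 1 *
    {1, of a, of γ * of c, of α * of γ * of α * of a * of c}

/-- Words representing the elements of `Γ_{C₁}`. The alternating products of `a α` and `b β` are
written as they are in `normalFormsC`. -/
def normalFormsC₁ : Finset (FreeMonoid Gen) :=
  dihedralFinset (of γ) (of γ) 1 *
    ((Finset.Iic 4).image (fun n => altMul (of α) (of β) n * altMul (of a) (of b) n) ∪
      (Finset.Iio 4).image (fun n => altMul (of β) (of α) n * altMul (of b) (of a) n))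

/-- Words representing the elements of `N`, a single one for each element: the choices above are
such that elements common to two of the six subgroups are represented by the same word. -/
def normalForms : Finset (FreeMonoid Gen) :=
  normalFormsA ∪ normalFormsB ∪ normalFormsC ∪ normalFormsA₁ ∪ normalFormsB₁ ∪ normalFormsC₁

/-- The action of a word in the generators on the words `11111`, `12111`, `21111` of `X*`, encoded
as a natural number because the kernel compares those fast. -/
def testCode (u : FreeMonoid Gen) : ℕ :=
  Encodable.encode ([[0, 0, 0, 0, 0], [0, 1, 0, 0, 0], [1, 0, 0, 0, 0]].map (wordAct u))

theorem card_normalForms_and_card_image_testCode :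
    normalForms.card = 288 ∧ (normalForms.image testCode).card = 288 := by
  -- `Finset.image` removes duplicates by a procedure that is slow in the kernel.
  rw [← Finset.sup_singleton_apply]
  decide +kernel

theorem testCode_injOn_normalForms : Set.InjOn testCode normalForms := by
  obtain ⟨card_normalForms, card_image⟩ := card_normalForms_and_card_image_testCode
  rw [← Finset.card_image_iff, card_image, card_normalForms]

end NormalForms

namespace NekSystem

variable (S : NekSystem)

/-- The bijection named by a generator. -/
def gen : Gen → Equiv.Perm Word
  | .α => S.α
  | .β => S.β
  | .γ => S.γ
  | .a => S.a
  | .b => S.b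
  | .c => S.c

/-- The bijection represented by a word in the generators. -/
def eval : FreeMonoid Gen →* Equiv.Perm Word := FreeMonoid.lift S.gen

@[simp]
theorem eval_of (g : Gen) : S.eval (.of g) = S.gen g := FreeMonoid.lift_eval_of _ g

theorem α_apply (w : Word) : S.α w = w.modifyHead permSigma := by
  cases w <;> simp

theorem a_apply (w : Word) : S.a w = w.modifyHead permPi := by
  cases w <;> simp

theorem β_apply_and_γ_apply (w : Word) : S.β w = betaAct w ∧ S.γ w = gammaAct w := by
  induction w using word_induction <;> simp_all [betaAct, gammaAct, α_apply]

theorem α_a_apply (w : Word) : S.α (S.a w) = w.modifyHead (permPi ∘ permSigma) := by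
  induction w using word_induction <;> simp

theorem b_apply_and_c_apply (w : Word) : S.b w = bAct w ∧ S.c w = cAct w := by
  induction w using word_induction <;>
    simp_all [bAct, cAct, α_a_apply, ← (S.β_apply_and_γ_apply _).1]

theorem gen_apply (g : Gen) (w : Word) : S.gen g w = g.act w := by
  cases g
  exacts [S.α_apply w, (S.β_apply_and_γ_apply w).1, (S.β_apply_and_γ_apply w).2, S.a_apply w,
    (S.b_apply_and_c_apply w).1, (S.b_apply_and_c_apply w).2]

theorem eval_apply (u : FreeMonoid Gen) (w : Word) : S.eval u w = wordAct u w := by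
  induction u using FreeMonoid.inductionOn' generalizing w with
  | one => rfl
  | of_mul g u ih =>
    rw [map_mul, map_mul, Equiv.Perm.mul_apply, ih, eval_of, gen_apply]
    rfl

theorem eval_injOn_normalForms : Set.InjOn S.eval normalForms := by
  intro u hu v hv huv
  have wordAct_eq : wordAct u = wordAct v := by
    funext w
    rw [← S.eval_apply, ← S.eval_apply, huv]
  refine testCode_injOn_normalForms hu hv ?_
  rw [testCode, testCode, wordAct_eq]

theorem image_normalFormsA :
    S.eval '' normalFormsA = closure {S.β, S.γ, S.b, S.c} := by
  simp [normalFormsA, closure_βγbc, Set.image_mul, image_dihedralSet, gen]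

theorem image_normalFormsB :
    S.eval '' normalFormsB = closure {S.α, S.γ, S.a, S.c} := by
  simp [normalFormsB, closure_αγac, Set.image_mul, image_dihedralSet, gen]

theorem image_normalFormsC :
    S.eval '' normalFormsC = closure {S.α, S.β, S.a, S.b} := by
  simp [normalFormsC, closure_αβab, Set.image_mul, image_dihedralSet, gen]

theorem image_normalFormsA₁ :
    S.eval '' normalFormsA₁ = closure {S.α, S.b, S.c} := by
  simp [normalFormsA₁, closure_αbc, Set.image_mul, image_dihedralSet, gen]

theorem image_normalFormsB₁ :
    S.eval '' normalFormsB₁ = closure {S.β, S.a, S.c * S.γ} := by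
  have acγ_eq : S.a * (S.γ * S.c) = S.α * S.γ * S.α * S.a * S.c := by ext1 w; simp
  rw [closure_βacγ, S.commute_c_γ.eq, dihedralSet_two, acγ_eq]
  simp [normalFormsB₁, Set.image_mul, Set.image_insert_eq, image_dihedralSet, gen]

theorem image_normalFormsC₁ :
    S.eval '' normalFormsC₁ = closure {S.γ, S.a * S.α, S.b * S.β} := by
  have dihedralSet_eq : dihedralSet (S.a * S.α) (S.b * S.β) 4 =
      (fun n => altMul S.α S.β n * altMul S.a S.b n) '' Set.Iic 4 ∪
        (fun n => altMul S.β S.α n * altMul S.b S.a n) '' Set.Iio 4 := by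
    simp only [dihedralSet, S.commute_a_α.eq, S.commute_b_β.eq,
      altMul_mul_altMul S.commute_a_α S.commute_a_β S.commute_b_α S.commute_b_β,
      altMul_mul_altMul S.commute_b_β S.commute_b_α S.commute_a_β S.commute_a_α]
  rw [closure_γaαbβ, dihedralSet_eq]
  simp [normalFormsC₁, Set.image_mul, Set.image_union, Set.image_image, map_altMul,
    image_dihedralSet, gen]

theorem Nuc_eq_image : Nuc S = S.eval '' normalForms := by
  simp only [Nuc, normalForms, Finset.coe_union, Set.image_union, image_normalFormsA,
    image_normalFormsB, image_normalFormsC, image_normalFormsA₁, image_normalFormsB₁,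
    image_normalFormsC₁]

end NekSystem

/-- The set N has exactly 288 elements. -/
theorem statement6 (S : NekSystem) : (Nuc S).ncard = 288 := by
  rw [S.Nuc_eq_image, S.eval_injOn_normalForms.ncard_image, Set.ncard_coe_finset,
    card_normalForms_and_card_image_testCode.1]
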